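/- arXiv:1403.7643 — 2 statements merged into one kernel-verified Lean document; each statement's English description precedes it below -/
import Mathlib

section
/- Let μ be an unconditional log-concave measure on ℝⁿ and let A be an unconditional convex subset of ℝⁿ. Then for all α₁, α₂ > 0 and every λ ∈ [0,1], μ((1-λ)α₁A + λα₂A)^{1/n} ≥ (1-λ)μ(α₁A)^{1/n} + λ μ(α₂A)^{1/n}. -/
open MeasureTheory Set Pointwise

/-- A function on ℝⁿ is unconditional if it is invariant under sign flips of coordinates. -/
def Unconditional (n : ℕ) (f : (Fin n → ℝ) → ℝ) : Prop :=
  ∀ (ε : Fin n → ℝ), (∀ i, ε i = 1 ∨ ε i = -1) →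
    ∀ x : Fin n → ℝ, f (fun i => ε i * x i) = f x

lemma bm_compact {K L W : Set ℝ} (hK : IsCompact K) (hK0 : K.Nonempty) (hL : IsCompact L)
    (hL0 : L.Nonempty) (hW : ∀ x ∈ K, ∀ y ∈ L, x + y ∈ W) :
    volume K + volume L ≤ volume W := by
  obtain ⟨k, hkK, hk⟩ := hK.exists_isGreatest hK0
  obtain ⟨m, hmL, hm⟩ := hL.exists_isLeast hL0
  have h1 : volume K ≤ volume (W ∩ Iic (k + m)) := by
    rw [← measure_preimage_add_right volume (-m) K]
    apply measure_mono
    intro z hz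
    have hz' : z + -m ∈ K := hz
    refine ⟨?_, ?_⟩
    · simpa using hW _ hz' _ hmL
    · have := hk hz'
      simp only [mem_Iic]; linarith
  have h2 : volume L ≤ volume (W \ Iic (k + m)) := by
    rw [← measure_preimage_add_right volume (-k) L,
      ← measure_sdiff_null (s := (fun h => h + -k) ⁻¹' L) (t := {k + m}) (by simp)]
    apply measure_mono
    rintro z ⟨hz, hz2⟩
    have hz' : z + -k ∈ L := hz
    refine ⟨?_, ?_⟩
    · simpa using hW _ hkK _ hz'
    · have := hm hz'
      simp only [mem_Iic, mem_singleton_iff] at hz2 ⊢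
      intro h
      apply hz2
      linarith
  rw [← measure_inter_add_sdiff W (measurableSet_Iic (a := k + m))]
  exact add_le_add h1 h2

lemma bm_meas {S T W : Set ℝ} (hS : MeasurableSet S) (hS0 : S.Nonempty) (hT : MeasurableSet T)
    (hT0 : T.Nonempty) (hW : ∀ x ∈ S, ∀ y ∈ T, x + y ∈ W) :
    volume S + volume T ≤ volume W := by
  obtain ⟨s, hs⟩ := hS0
  obtain ⟨t, ht⟩ := hT0
  have key : ∀ K, IsCompact K → K ⊆ S → ∀ L, IsCompact L → L ⊆ T →
      volume K + volume L ≤ volume W := by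
    intro K hK hKS L hL hLT
    refine le_trans (add_le_add (measure_mono (subset_insert s K)) (measure_mono (subset_insert t L)))
      (bm_compact (hK.insert s) ⟨s, mem_insert _ _⟩ (hL.insert t) ⟨t, mem_insert _ _⟩ ?_)
    intro x hx y hy
    exact hW x (insert_subset hs hKS hx) y (insert_subset ht hLT hy)
  rw [hS.measure_eq_iSup_isCompact, hT.measure_eq_iSup_isCompact]
  have e : ∀ U : Set ℝ, (⨆ (K : Set ℝ) (_ : K ⊆ U) (_ : IsCompact K), volume K)
      = ⨆ K : {K : Set ℝ // K ⊆ U ∧ IsCompact K}, volume K.1 := by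
    intro U
    simp only [iSup_subtype, iSup_and]
  rw [e S, e T]
  have : Nonempty {K : Set ℝ // K ⊆ S ∧ IsCompact K} := ⟨∅, by simp⟩
  have : Nonempty {K : Set ℝ // K ⊆ T ∧ IsCompact K} := ⟨∅, by simp⟩
  exact ENNReal.iSup_add_iSup_le fun K L => key _ K.2.2 K.2.1 _ L.2.2 L.2.1

lemma bm_conv {S T W : Set ℝ} {θ : ℝ} (h0 : 0 < θ) (h1 : θ < 1)
    (hS : MeasurableSet S) (hS0 : S.Nonempty) (hT : MeasurableSet T)
    (hT0 : T.Nonempty) (hW : ∀ x ∈ S, ∀ y ∈ T, (1 - θ) * x + θ * y ∈ W) :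
    ENNReal.ofReal (1 - θ) * volume S + ENNReal.ofReal θ * volume T ≤ volume W := by
  have h2 : 0 < 1 - θ := by linarith
  have := bm_meas (W := W) (hS.const_smul₀ (1 - θ)) (hS0.smul_set (a := 1 - θ)) (hT.const_smul₀ θ)
    (hT0.smul_set (a := θ)) (by
      rintro _ ⟨x, hx, rfl⟩ _ ⟨y, hy, rfl⟩
      exact hW x hx y hy)
  simpa [Measure.addHaar_smul, abs_of_pos, h0, h2] using this

/-- normalised one-dimensional Prekopa-Leindler. -/
lemma pl_norm {f g h : ℝ → ℝ} {θ : ℝ} (h0 : 0 < θ) (h1 : θ < 1)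
    (hf : Measurable f) (hg : Measurable g) (hh : Measurable h)
    (f0 : ∀ x, 0 ≤ f x) (g0 : ∀ x, 0 ≤ g x) (hh0 : ∀ x, 0 ≤ h x)
    (f1 : ∀ x, f x ≤ 1) (g1 : ∀ x, g x ≤ 1)
    (fs : ∀ t < 1, ∃ x, t < f x) (gs : ∀ t < 1, ∃ x, t < g x)
    (H : ∀ x y, f x ^ (1 - θ) * g y ^ θ ≤ h ((1 - θ) * x + θ * y)) :
    ENNReal.ofReal (1 - θ) * (∫⁻ x, ENNReal.ofReal (f x)) +
      ENNReal.ofReal θ * (∫⁻ x, ENNReal.ofReal (g x)) ≤ ∫⁻ x, ENNReal.ofReal (h x) := by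
  have h2 : 0 < 1 - θ := by linarith
  rw [lintegral_eq_lintegral_meas_lt volume (.of_forall f0) hf.aemeasurable,
    lintegral_eq_lintegral_meas_lt volume (.of_forall g0) hg.aemeasurable,
    lintegral_eq_lintegral_meas_lt volume (.of_forall hh0) hh.aemeasurable]
  have am : ∀ u : ℝ → ℝ, Measurable fun t : ℝ => volume {a : ℝ | t < u a} := fun u =>
    Antitone.measurable fun s t hst => measure_mono fun a (ha : t < u a) => lt_of_le_of_lt hst ha
  rw [← lintegral_const_mul _ (am f), ← lintegral_const_mul _ (am g),
    ← lintegral_add_left ((am f).const_mul _)]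
  refine setLIntegral_mono (am h) fun t (ht : 0 < t) => ?_
  rcases lt_or_ge t 1 with ht1 | ht1
  · refine bm_conv h0 h1 (measurableSet_lt measurable_const hf) (fs t ht1)
      (measurableSet_lt measurable_const hg) (gs t ht1) ?_
    intro x (hx : t < f x) y (hy : t < g y)
    refine lt_of_lt_of_le ?_ (H x y)
    calc t = t ^ (1 - θ) * t ^ θ := by
            rw [← Real.rpow_add ht]; simp
      _ < _ := by
            apply mul_lt_mul'' (Real.rpow_lt_rpow ht.le hx h2) (Real.rpow_lt_rpow ht.le hy h0) <;>
              positivity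
  · have e1 : {a | t < f a} = ∅ := by
      ext a; simpa using (f1 a).trans ht1
    have e2 : {a | t < g a} = ∅ := by
      ext a; simpa using (g1 a).trans ht1
    simp [e1, e2]

lemma enn_amgm (a b : ENNReal) {θ : ℝ} (h0 : 0 < θ) (h1 : θ < 1) :
    a ^ (1 - θ) * b ^ θ ≤ ENNReal.ofReal (1 - θ) * a + ENNReal.ofReal θ * b := by
  have h2 : 0 < 1 - θ := by linarith
  by_cases ha : a = ⊤
  · subst ha; rw [ENNReal.mul_top (by simpa using h2)]; simp
  by_cases hb : b = ⊤
  · subst hb; rw [ENNReal.mul_top (a := ENNReal.ofReal θ) (by simpa using h0)]; simp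
  lift a to NNReal using ha
  lift b to NNReal using hb
  have := NNReal.geom_mean_le_arith_mean2_weighted (Real.toNNReal (1 - θ)) (Real.toNNReal θ) a b
    (by rw [← Real.toNNReal_add h2.le h0.le]; simp)
  rw [Real.coe_toNNReal _ h2.le, Real.coe_toNNReal _ h0.le] at this
  rw [← ENNReal.coe_rpow_of_nonneg _ h2.le, ← ENNReal.coe_rpow_of_nonneg _ h0.le]
  simp only [ENNReal.ofReal]
  exact_mod_cast this

lemma pl_bdd {f g h : ℝ → ENNReal} {θ : ℝ} (h0 : 0 < θ) (h1 : θ < 1)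
    (hf : Measurable f) (hg : Measurable g) (hh : Measurable h)
    (hM : ⨆ x, f x ≠ ⊤) (hK : ⨆ x, g x ≠ ⊤)
    (H : ∀ x y, f x ^ (1 - θ) * g y ^ θ ≤ h ((1 - θ) * x + θ * y)) :
    (∫⁻ x, f x) ^ (1 - θ) * (∫⁻ x, g x) ^ θ ≤ ∫⁻ x, h x := by
  have h2 : 0 < 1 - θ := by linarith
  set M := ⨆ x, f x with hMd
  set K := ⨆ x, g x with hKd
  have fM : ∀ x, f x ≤ M := fun x => le_iSup f x
  have gK : ∀ x, g x ≤ K := fun x => le_iSup g x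
  by_cases M0 : M = 0
  · have : ∀ x, f x = 0 := fun x => le_antisymm (M0 ▸ fM x) zero_le
    simp [this, h2]
  by_cases K0 : K = 0
  · have : ∀ x, g x = 0 := fun x => le_antisymm (K0 ▸ gK x) zero_le
    simp [this, h0]
  set c := M ^ (1 - θ) * K ^ θ with hc
  have c0 : c ≠ 0 := by
    simp [hc, M0, K0, hM, hK]
  have ct : c ≠ ⊤ := ENNReal.mul_ne_top (ENNReal.rpow_ne_top_of_nonneg h2.le hM)
    (ENNReal.rpow_ne_top_of_nonneg h0.le hK)
  have dv : ∀ (u : ℝ → ENNReal) (L : ENNReal), L ≠ 0 → L ≠ ⊤ → (∀ x, u x ≤ L) →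
      ∀ x, u x / L ≤ 1 := by
    intro u L _ _ hu x
    exact ENNReal.div_le_of_le_mul (by simpa using hu x)
  have f1 := dv f M M0 hM fM
  have g1 := dv g K K0 hK gK
  have m1 : ∀ x, min (h x / c) 1 ≤ 1 := fun x => min_le_right _ _
  have nt : ∀ a : ENNReal, a ≤ 1 → a ≠ ⊤ := fun a ha => ne_top_of_le_ne_top ENNReal.one_ne_top ha
  have sup : ∀ (u : ℝ → ENNReal) (L : ENNReal), L = ⨆ x, u x → L ≠ 0 → L ≠ ⊤ →
      (∀ x, u x / L ≤ 1) → ∀ t : ℝ, t < 1 → ∃ x, t < (u x / L).toReal := by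
    intro u L hL L0 Lt hu t ht
    rcases lt_or_ge t 0 with h | h
    · exact ⟨0, lt_of_lt_of_le h ENNReal.toReal_nonneg⟩
    have : ENNReal.ofReal t * L < ⨆ x, u x := by
      rw [← hL]
      calc ENNReal.ofReal t * L < 1 * L := by
            rw [ENNReal.mul_lt_mul_iff_left L0 Lt]
            exact ENNReal.ofReal_lt_one.2 ht
        _ = L := one_mul L
    obtain ⟨x, hx⟩ := lt_iSup_iff.1 this
    refine ⟨x, ?_⟩
    rw [← ENNReal.ofReal_lt_iff_lt_toReal h (nt _ (hu x))]
    exact (ENNReal.lt_div_iff_mul_lt (Or.inl L0) (Or.inl Lt)).2 hx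
  have main := pl_norm (f := fun x => (f x / M).toReal) (g := fun x => (g x / K).toReal)
    (h := fun x => (min (h x / c) 1).toReal) h0 h1
    (hf.div_const M).ennreal_toReal (hg.div_const K).ennreal_toReal
    ((hh.div_const c).min measurable_const).ennreal_toReal
    (fun _ => ENNReal.toReal_nonneg) (fun _ => ENNReal.toReal_nonneg)
    (fun _ => ENNReal.toReal_nonneg)
    (fun x => ENNReal.toReal_mono ENNReal.one_ne_top (f1 x))
    (fun x => ENNReal.toReal_mono ENNReal.one_ne_top (g1 x))
    (sup f M hMd M0 hM f1) (sup g K hKd K0 hK g1) (by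
      intro x y
      rw [ENNReal.toReal_rpow, ENNReal.toReal_rpow, ← ENNReal.toReal_mul]
      refine ENNReal.toReal_mono (nt _ (m1 _)) (le_min ?_ ?_)
      · rw [ENNReal.div_rpow_of_nonneg _ _ h2.le, ENNReal.div_rpow_of_nonneg _ _ h0.le,
          ENNReal.le_div_iff_mul_le (Or.inl c0) (Or.inl ct)]
        refine le_trans (le_of_eq ?_) (H x y)
        have e1 : f x ^ (1 - θ) / M ^ (1 - θ) * M ^ (1 - θ) = f x ^ (1 - θ) :=
          ENNReal.div_mul_cancel (by simp [M0, hM])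
            (ENNReal.rpow_ne_top_of_nonneg h2.le hM)
        have e2 : g y ^ θ / K ^ θ * K ^ θ = g y ^ θ :=
          ENNReal.div_mul_cancel (by simp [K0, hK])
            (ENNReal.rpow_ne_top_of_nonneg h0.le hK)
        rw [hc, mul_mul_mul_comm, e1, e2]
      · exact mul_le_one' (ENNReal.rpow_le_one (f1 x) h2.le) (ENNReal.rpow_le_one (g1 y) h0.le))
  simp only [ENNReal.ofReal_toReal (nt _ (f1 _)), ENNReal.ofReal_toReal (nt _ (g1 _)),
    ENNReal.ofReal_toReal (nt _ (m1 _))] at main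
  have i1 : ∫⁻ x, f x = M * ∫⁻ x, f x / M := by
    rw [← lintegral_const_mul _ (hf.div_const M)]
    congr with x
    rw [ENNReal.mul_div_cancel M0 hM]
  have i2 : ∫⁻ x, g x = K * ∫⁻ x, g x / K := by
    rw [← lintegral_const_mul _ (hg.div_const K)]
    congr with x
    rw [ENNReal.mul_div_cancel K0 hK]
  have i3 : ∫⁻ x, h x = c * ∫⁻ x, h x / c := by
    rw [← lintegral_const_mul _ (hh.div_const c)]
    congr with x
    rw [ENNReal.mul_div_cancel c0 ct]
  rw [i1, i2, i3, ENNReal.mul_rpow_of_nonneg _ _ h2.le, ENNReal.mul_rpow_of_nonneg _ _ h0.le,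
    mul_mul_mul_comm, ← hc]
  gcongr
  refine (enn_amgm _ _ h0 h1).trans (main.trans ?_)
  exact lintegral_mono fun x => min_le_left _ _

lemma pl_one {f g h : ℝ → ENNReal} {θ : ℝ} (h0 : 0 < θ) (h1 : θ < 1)
    (hf : Measurable f) (hg : Measurable g) (hh : Measurable h)
    (H : ∀ x y, f x ^ (1 - θ) * g y ^ θ ≤ h ((1 - θ) * x + θ * y)) :
    (∫⁻ x, f x) ^ (1 - θ) * (∫⁻ x, g x) ^ θ ≤ ∫⁻ x, h x := by
  have h2 : 0 < 1 - θ := by linarith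
  have lim : ∀ u : ℝ → ENNReal, Measurable u →
      ∫⁻ x, u x = ⨆ N : ℕ, ∫⁻ x, min (u x) N := by
    intro u hu
    rw [← lintegral_iSup]
    · congr with x
      rw [← inf_iSup_eq, ENNReal.iSup_natCast]; simp
    · intro N; exact hu.min measurable_const
    · intro N M hNM x
      exact min_le_min le_rfl (by exact_mod_cast hNM)
  have key : ∀ N M : ℕ, (∫⁻ x, min (f x) N) ^ (1 - θ) * (∫⁻ x, min (g x) M) ^ θ ≤ ∫⁻ x, h x := by
    intro N M
    refine pl_bdd h0 h1 (hf.min measurable_const) (hg.min measurable_const) hh ?_ ?_ ?_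
    · exact ne_top_of_le_ne_top (ENNReal.natCast_ne_top N) (iSup_le fun x => min_le_right _ _)
    · exact ne_top_of_le_ne_top (ENNReal.natCast_ne_top M) (iSup_le fun x => min_le_right _ _)
    · intro x y
      refine le_trans ?_ (H x y)
      gcongr <;> exact min_le_left _ _
  rw [lim f hf, lim g hg]
  have e : ∀ p : ℝ, 0 < p → ∀ u : ℕ → ENNReal, (⨆ N, u N) ^ p = ⨆ N, u N ^ p := by
    intro p hp u
    exact (ENNReal.orderIsoRpow p hp).map_iSup u
  rw [e _ h2, e _ h0, ENNReal.iSup_mul]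
  refine iSup_le fun N => ?_
  rw [ENNReal.mul_iSup]
  exact iSup_le fun M => key N M

lemma pl_mul {f g h : ℝ → ENNReal} {θ : ℝ} (h0 : 0 < θ) (h1 : θ < 1)
    (hf : Measurable f) (hg : Measurable g) (hh : Measurable h)
    (H : ∀ x y, 0 < x → 0 < y → f x ^ (1 - θ) * g y ^ θ ≤ h (x ^ (1 - θ) * y ^ θ)) :
    (∫⁻ x in Ioi 0, f x) ^ (1 - θ) * (∫⁻ x in Ioi 0, g x) ^ θ ≤ ∫⁻ x in Ioi 0, h x := by
  have h2 : 0 < 1 - θ := by linarith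
  have cv : ∀ u : ℝ → ENNReal, ∫⁻ x in Ioi 0, u x =
      ∫⁻ x, ENNReal.ofReal (Real.exp x) * u (Real.exp x) := by
    intro u
    have := lintegral_image_eq_lintegral_abs_deriv_mul (s := univ) (f := Real.exp)
      (f' := Real.exp) MeasurableSet.univ
      (fun x _ => (Real.hasDerivAt_exp x).hasDerivWithinAt) Real.exp_injective.injOn u
    simpa [Real.range_exp] using this
  have mm : ∀ u : ℝ → ENNReal, Measurable u →
      Measurable fun x => ENNReal.ofReal (Real.exp x) * u (Real.exp x) := by
    intro u hu
    exact (ENNReal.measurable_ofReal.comp Real.measurable_exp).mul (hu.comp Real.measurable_exp)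
  rw [cv f, cv g, cv h]
  refine pl_one h0 h1 (mm f hf) (mm g hg) (mm h hh) ?_
  intro x y
  have := H _ _ (Real.exp_pos x) (Real.exp_pos y)
  rw [ENNReal.mul_rpow_of_nonneg _ _ h2.le, ENNReal.mul_rpow_of_nonneg _ _ h0.le,
    ENNReal.ofReal_rpow_of_pos (Real.exp_pos x), ENNReal.ofReal_rpow_of_pos (Real.exp_pos y)]
  have e : Real.exp ((1 - θ) * x + θ * y) = Real.exp x ^ (1 - θ) * Real.exp y ^ θ := by
    rw [Real.exp_add, ← Real.exp_mul, ← Real.exp_mul]; ring_nf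
  rw [e, mul_mul_mul_comm, ← ENNReal.ofReal_mul (by positivity)]
  gcongr

noncomputable def halfLine : Measure ℝ := volume.restrict (Ioi 0)
instance : SigmaFinite halfLine := by unfold halfLine; infer_instance

lemma pl_n (n : ℕ) {θ : ℝ} (h0 : 0 < θ) (h1 : θ < 1) : ∀ {f g h : (Fin n → ℝ) → ENNReal}
    (_ : Measurable f) (_ : Measurable g) (_ : Measurable h)
    (_ : ∀ x y, (∀ i, 0 < x i) → (∀ i, 0 < y i) →
      f x ^ (1 - θ) * g y ^ θ ≤ h (fun i => x i ^ (1 - θ) * y i ^ θ)),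
    (∫⁻ x, f x ∂(Measure.pi fun _ => halfLine)) ^ (1 - θ) * (∫⁻ x, g x ∂(Measure.pi fun _ => halfLine)) ^ θ
      ≤ ∫⁻ x, h x ∂(Measure.pi fun _ => halfLine) := by
  have h2 : 0 < 1 - θ := by linarith
  induction n with
  | zero =>
    intro f g h hf hg hh H
    simp only [Measure.pi_of_empty _ default, lintegral_dirac]
    convert H default default (fun i => i.elim0) (fun i => i.elim0)
  | succ n ih =>
    intro f g h hf hg hh H
    have hc : ∀ p : ℝ × (Fin n → ℝ),
        (MeasurableEquiv.piFinSuccAbove (fun _ : Fin (n+1) => ℝ) 0).symm p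
          = Fin.cons p.1 p.2 := by
      intro p
      ext i
      refine Fin.cases ?_ (fun j => ?_) i <;> simp [MeasurableEquiv.piFinSuccAbove]
    have spl : ∀ u : (Fin (n+1) → ℝ) → ENNReal, Measurable u →
        ∫⁻ x, u x ∂(Measure.pi fun _ => halfLine) =
        ∫⁻ a, ∫⁻ b, u (Fin.cons a b) ∂(Measure.pi fun _ => halfLine) ∂halfLine := by
      intro u hu
      have mp := (measurePreserving_piFinSuccAbove (fun _ : Fin (n+1) => halfLine) 0).symm
      rw [← mp.lintegral_comp hu, lintegral_prod]
      · simp only [hc]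
      · exact (hu.comp mp.measurable).aemeasurable
    have ms : ∀ u : (Fin (n+1) → ℝ) → ENNReal, Measurable u →
        Measurable fun p : ℝ × (Fin n → ℝ) => u (Fin.cons p.1 p.2) := by
      intro u hu
      simp only [← hc]
      exact hu.comp (MeasurableEquiv.piFinSuccAbove (fun _ : Fin (n+1) => ℝ) 0).symm.measurable
    rw [spl f hf, spl g hg, spl h hh]
    refine pl_mul h0 h1 (ms f hf).lintegral_prod_right' (ms g hg).lintegral_prod_right'
      (ms h hh).lintegral_prod_right' ?_
    intro x y hx hy
    refine ih ((ms f hf).comp measurable_prodMk_left) ((ms g hg).comp measurable_prodMk_left)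
      ((ms h hh).comp measurable_prodMk_left) ?_
    intro x' y' hx' hy'
    convert H (Fin.cons x x') (Fin.cons y y') ?_ ?_ using 2
    · ext i; refine Fin.cases ?_ (fun j => ?_) i <;> simp
    · intro i; refine Fin.cases ?_ (fun j => ?_) i <;> simp [hx, hx']
    · intro i; refine Fin.cases ?_ (fun j => ?_) i <;> simp [hy, hy']

lemma lint_abs {n : ℕ} {u : (Fin n → ℝ) → ENNReal} (hu : Measurable u)
    (hs : ∀ x, u (fun i => |x i|) = u x) :
    ∫⁻ x, u x = 2 ^ n * ∫⁻ x, u x ∂(Measure.pi fun _ => halfLine) := by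
  have h1 : (volume : Measure ℝ).map (fun x => |x|) = (2 : NNReal) • halfLine := by
    ext s hs
    rw [Measure.map_apply measurable_abs hs, Measure.smul_apply, halfLine,
      Measure.restrict_apply hs]
    have hm : MeasurableSet ((fun x : ℝ => |x|) ⁻¹' s) := measurable_abs hs
    have d1 := measure_inter_add_sdiff (μ := volume) ((fun x : ℝ => |x|) ⁻¹' s)
      (measurableSet_Ioi (a := (0:ℝ)))
    rw [← d1]
    have a1 : (fun x : ℝ => |x|) ⁻¹' s ∩ Ioi 0 = s ∩ Ioi 0 := by
      ext x
      simp only [mem_inter_iff, mem_preimage, mem_Ioi]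
      constructor
      · rintro ⟨p, q⟩; rw [abs_of_pos q] at p; exact ⟨p, q⟩
      · rintro ⟨p, q⟩; rw [abs_of_pos q]; exact ⟨p, q⟩
    have a2 : volume ((fun x : ℝ => |x|) ⁻¹' s \ Ioi 0) = volume (s ∩ Ioi 0) := by
      rw [← measure_sdiff_null (s := (fun x : ℝ => |x|) ⁻¹' s \ Ioi 0) (t := {(0:ℝ)}) (by simp),
        ← Measure.measure_preimage_neg volume (s ∩ Ioi 0)]
      congr 1
      ext x
      simp only [mem_sdiff, mem_inter_iff, mem_preimage, mem_Ioi, mem_singleton_iff, not_lt]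
      constructor
      · rintro ⟨⟨p, q⟩, r⟩
        have : x < 0 := lt_of_le_of_ne q r
        rw [abs_of_neg this] at p
        exact ⟨p, by linarith⟩
      · rintro ⟨p, q⟩
        have : x < 0 := by linarith
        rw [abs_of_neg this]
        exact ⟨⟨p, this.le⟩, this.ne⟩
    rw [a1, a2, ← two_mul]
    rfl
  have h3 : (volume : Measure (Fin n → ℝ)).map (fun x i => |x i|)
      = (2 : NNReal) ^ n • Measure.pi (fun _ => halfLine) := by
    have : SigmaFinite ((volume : Measure ℝ).map (fun x => |x|)) := by
      rw [h1]; infer_instance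
    rw [volume_pi, Measure.pi_map_pi (fun _ => measurable_abs.aemeasurable)]
    refine Measure.pi_eq fun s hs => ?_
    simp only [h1, Measure.smul_apply, Measure.pi_pi]
    simp [Finset.prod_mul_distrib, ENNReal.smul_def]
  calc ∫⁻ x, u x = ∫⁻ x : Fin n → ℝ, u (fun i => |x i|) := by simp only [hs]
    _ = ∫⁻ x, u x ∂((volume : Measure (Fin n → ℝ)).map (fun x i => |x i|)) := by
        rw [lintegral_map hu]
        exact measurable_pi_lambda _ fun i => measurable_abs.comp (measurable_pi_apply i)
    _ = _ := by
        rw [h3, lintegral_smul_measure]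
        simp [ENNReal.smul_def]

lemma dom_mem {n : ℕ} {C : Set (Fin n → ℝ)} (hc : Convex ℝ C)
    (hu : ∀ ε : Fin n → ℝ, (∀ i, ε i = 1 ∨ ε i = -1) → ∀ x ∈ C, (fun i => ε i * x i) ∈ C)
    {x y : Fin n → ℝ} (hy : y ∈ C) (h : ∀ i, |x i| ≤ |y i|) : x ∈ C := by
  have key : ∀ s : Finset (Fin n), (fun i => if i ∈ s then x i else y i) ∈ C := by
    intro s
    induction s using Finset.induction_on with
    | empty => simpa using hy
    | insert i s his ih =>
      have hw := hu (Function.update 1 i (-1)) (by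
        intro j
        by_cases hj : j = i
        · subst hj; simp
        · simp [hj]) _ ih
      have hr : |x i / y i| ≤ 1 := by
        rw [abs_div]; exact div_le_one_of_le₀ (h i) (abs_nonneg _)
      have hr2 : x i / y i * y i = x i := by
        by_cases h0 : y i = 0
        · have := h i
          rw [h0, abs_zero, abs_nonpos_iff] at this
          simp [this]
        · field_simp
      rw [abs_le] at hr
      have := hc ih hw (a := (1 + x i / y i) / 2) (b := (1 - x i / y i) / 2)
        (by linarith) (by linarith) (by ring)
      convert this using 1
      ext j
      by_cases hj : j = i
      · subst hj
        simp [his]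
        linear_combination -hr2
      · simp only [Finset.mem_insert, hj, false_or, Pi.add_apply, Pi.smul_apply, smul_eq_mul,
          Function.update_of_ne hj, Pi.one_apply]
        ring
  simpa using key Finset.univ

lemma phi_dom {n : ℕ} {φ : (Fin n → ℝ) → ℝ} (hφpos : ∀ x, 0 ≤ φ x)
    (hφuncond : Unconditional n φ)
    (hφlogconcave : ∀ x y : Fin n → ℝ, ∀ l : ℝ, l ∈ Set.Icc (0:ℝ) 1 →
      φ ((1 - l) • x + l • y) ≥ φ x ^ (1 - l) * φ y ^ l)
    {x y : Fin n → ℝ} (h : ∀ i, |x i| ≤ |y i|) : φ y ≤ φ x := by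
  rcases (hφpos y).eq_or_lt with h0 | h0
  · rw [← h0]; exact hφpos x
  refine dom_mem (C := {z | φ y ≤ φ z}) ?_ ?_ (le_refl (φ y)) h
  · intro u hu v hv a b ha hb hab
    have hb1 : b ≤ 1 := by linarith
    have := hφlogconcave u v b ⟨hb, hb1⟩
    obtain rfl : a = 1 - b := by linarith
    refine le_trans ?_ this
    calc φ y = φ y ^ (1 - b) * φ y ^ b := by rw [← Real.rpow_add h0]; simp
      _ ≤ _ := by
        have hu' : φ y ≤ φ u := hu
        have hv' : φ y ≤ φ v := hv
        have := Real.rpow_nonneg (hφpos u) (1 - b)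
        gcongr
  · intro ε hε z hz
    show φ y ≤ _
    rw [hφuncond ε hε z]; exact hz

/-- The B-inequality (log-concavity of `t ↦ μ (e^t A)`). -/
lemma b_ineq (n : ℕ) (φ : (Fin n → ℝ) → ℝ)
    (hφmeas : Measurable φ) (hφpos : ∀ x, 0 ≤ φ x)
    (hφuncond : Unconditional n φ)
    (hφlogconcave : ∀ x y : Fin n → ℝ, ∀ l : ℝ, l ∈ Set.Icc (0:ℝ) 1 →
      φ ((1 - l) • x + l • y) ≥ φ x ^ (1 - l) * φ y ^ l)
    (μ : Measure (Fin n → ℝ))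
    (hμ : μ = volume.withDensity (fun x => ENNReal.ofReal (φ x)))
    (A : Set (Fin n → ℝ)) (hA : MeasurableSet A) (hAconv : Convex ℝ A)
    (hAuncond : ∀ (ε : Fin n → ℝ), (∀ i, ε i = 1 ∨ ε i = -1) →
      ∀ x : Fin n → ℝ, ((fun i => ε i * x i) ∈ A ↔ x ∈ A))
    (a b : ℝ) (ha : 0 < a) (hb : 0 < b) (θ : ℝ) (h0 : 0 < θ) (h1 : θ < 1) :
    μ (a • A) ^ (1 - θ) * μ (b • A) ^ θ ≤ μ ((a ^ (1 - θ) * b ^ θ) • A) := by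
  have h2 : 0 < 1 - θ := by linarith
  have hAu : ∀ ε : Fin n → ℝ, (∀ i, ε i = 1 ∨ ε i = -1) → ∀ x ∈ A, (fun i => ε i * x i) ∈ A :=
    fun ε hε x hx => (hAuncond ε hε x).2 hx
  have mem : ∀ c : ℝ, 0 < c → ∀ x, x ∈ c • A ↔ c⁻¹ • x ∈ A := fun c hc x =>
    mem_smul_set_iff_inv_smul_mem₀ hc.ne' A x
  have ums : ∀ c : ℝ, Measurable ((c • A).indicator fun x => ENNReal.ofReal (φ x)) := fun c =>
    (ENNReal.measurable_ofReal.comp hφmeas).indicator (hA.const_smul₀ c)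
  have hv : ∀ c : ℝ, 0 < c → μ (c • A) = 2 ^ n *
      ∫⁻ x, (c • A).indicator (fun x => ENNReal.ofReal (φ x)) x
        ∂(Measure.pi fun _ => halfLine) := by
    intro c hc
    rw [hμ, withDensity_apply _ (hA.const_smul₀ c), ← lintegral_indicator (hA.const_smul₀ c)]
    refine lint_abs (ums c) ?_
    intro x
    have e1 : φ (fun i => |x i|) = φ x :=
      le_antisymm (phi_dom hφpos hφuncond hφlogconcave (by simp))
        (phi_dom hφpos hφuncond hφlogconcave (by simp))
    have e2 : (fun i => |x i|) ∈ c • A ↔ x ∈ c • A := by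
      rw [mem c hc, mem c hc]
      constructor <;> intro h <;> exact dom_mem hAconv hAu h (by simp)
    by_cases hx : x ∈ c • A
    · rw [indicator_of_mem hx, indicator_of_mem (e2.2 hx), e1]
    · rw [indicator_of_notMem hx, indicator_of_notMem (fun h => hx (e2.1 h))]
  set c := a ^ (1 - θ) * b ^ θ with hcd
  have hc : 0 < c := by positivity
  rw [hv a ha, hv b hb, hv c hc, ENNReal.mul_rpow_of_nonneg _ _ h2.le,
    ENNReal.mul_rpow_of_nonneg _ _ h0.le, mul_mul_mul_comm]
  have two : ((2 : ENNReal) ^ n) ^ (1 - θ) * ((2 : ENNReal) ^ n) ^ θ = 2 ^ n := by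
    rw [← ENNReal.rpow_add _ _ (by simp) (by simp)]; simp
  rw [two]
  gcongr
  refine pl_n n h0 h1 (ums a) (ums b) (ums c) ?_
  intro x y hx hy
  by_cases hxA : x ∈ a • A
  swap
  · rw [indicator_of_notMem hxA]; simp [h2]
  by_cases hyA : y ∈ b • A
  swap
  · rw [indicator_of_notMem hyA]; simp [h0]
  have amgm : ∀ p q : ℝ, 0 < p → 0 < q → p ^ (1 - θ) * q ^ θ ≤ (1 - θ) * p + θ * q :=
    fun p q hp hq => Real.geom_mean_le_arith_mean2_weighted h2.le h0.le hp.le hq.le (by ring)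
  have hz : (fun i => x i ^ (1 - θ) * y i ^ θ) ∈ c • A := by
    rw [mem c hc]
    rw [mem a ha] at hxA
    rw [mem b hb] at hyA
    refine dom_mem hAconv hAu (hAconv hxA hyA h2.le h0.le (by ring)) ?_
    intro i
    have hxi := hx i
    have hyi := hy i
    have hp : 0 < a⁻¹ * x i := by positivity
    have hq : 0 < b⁻¹ * y i := by positivity
    simp only [Pi.smul_apply, Pi.add_apply, smul_eq_mul]
    rw [abs_of_pos (by positivity), abs_of_pos (by positivity)]
    refine le_trans (le_of_eq ?_) (amgm _ _ hp hq)
    rw [Real.mul_rpow (by positivity) hxi.le, Real.mul_rpow (by positivity) hyi.le,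
      Real.inv_rpow ha.le, Real.inv_rpow hb.le, hcd, mul_inv]
    ring
  rw [indicator_of_mem hxA, indicator_of_mem hyA, indicator_of_mem hz,
    ENNReal.ofReal_rpow_of_nonneg (hφpos _) h2.le, ENNReal.ofReal_rpow_of_nonneg (hφpos _) h0.le,
    ← ENNReal.ofReal_mul (Real.rpow_nonneg (hφpos _) _)]
  apply ENNReal.ofReal_le_ofReal
  refine le_trans (hφlogconcave x y θ ⟨h0.le, h1.le⟩) (phi_dom hφpos hφuncond hφlogconcave ?_)
  intro i
  have hxi := hx i
  have hyi := hy i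
  simp only [Pi.smul_apply, Pi.add_apply, smul_eq_mul]
  rw [abs_of_pos (by positivity), abs_of_pos (by positivity)]
  exact amgm _ _ hxi hyi

lemma real_final {a b l X Y Z : ℝ} {n : ℕ} (hn : 0 < n) (ha : 0 < a) (hab : a < b)
    (hl0 : 0 < l) (hl1 : l < 1) (hX : 0 < X) (hXY : X ≤ Y) (hY : Y ≤ (b / a) ^ n * X)
    (hZ : ∀ θ : ℝ, 0 < θ → θ < 1 → a ^ (1 - θ) * b ^ θ = (1 - l) * a + l * b →
      X ^ (1 - θ) * Y ^ θ ≤ Z) :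
    (1 - l) * X ^ (1 / (n : ℝ)) + l * Y ^ (1 / (n : ℝ)) ≤ Z ^ (1 / (n : ℝ)) := by
  have hn' : (0:ℝ) < n := by exact_mod_cast hn
  have hb : 0 < b := ha.trans hab
  have hl2 : 0 < 1 - l := by linarith
  have hYp : 0 < Y := hX.trans_le hXY
  set r := b / a with hr
  have hr1 : 1 < r := by rw [hr, lt_div_iff₀ ha]; linarith
  have hrp : 0 < r := by linarith
  have lr : 0 < Real.log r := Real.log_pos hr1
  set d := (1 - l) + l * r with hd
  have hd1 : 1 < d := by rw [hd]; nlinarith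
  have hdr : d < r := by rw [hd]; nlinarith
  have ld : 0 < Real.log d := Real.log_pos hd1
  have ldr : Real.log d < Real.log r := Real.log_lt_log (by linarith) hdr
  set θ := Real.log d / Real.log r with hθ
  have t0 : 0 < θ := div_pos ld lr
  have t1 : θ < 1 := by rw [hθ, div_lt_one lr]; exact ldr
  have rθ : r ^ θ = d := by
    rw [Real.rpow_def_of_pos hrp, hθ, mul_div_cancel₀ _ lr.ne', Real.exp_log (by linarith)]
  have hbr : b = a * r := by rw [hr]; field_simp
  have hz := hZ θ t0 t1 (by
    rw [hbr, Real.mul_rpow ha.le hrp.le, ← mul_assoc, ← Real.rpow_add ha, rθ, hd]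
    simp
    ring)
  -- ratio
  set q := Y / X with hq
  have hq1 : 1 ≤ q := by rw [hq, le_div_iff₀ hX]; linarith
  have hqp : 0 < q := by linarith
  have hqr : q ≤ r ^ n := by rw [hq, div_le_iff₀ hX]; exact hY
  have hYq : Y = X * q := by rw [hq]; field_simp
  set s := Real.log q / (n * Real.log r) with hs
  have s0 : 0 ≤ s := by
    have := Real.log_nonneg hq1
    positivity
  have s1 : s ≤ 1 := by
    rw [hs, div_le_one (by positivity), ← Real.log_pow]
    exact Real.log_le_log hqp hqr
  have qs : q ^ (1 / (n:ℝ)) = r ^ s := by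
    rw [Real.rpow_def_of_pos hqp, Real.rpow_def_of_pos hrp, hs]
    congr 1
    field_simp
  have conc : (1 - l) + l * r ^ s ≤ d ^ s := by
    have := (Real.concaveOn_rpow s0 s1).2 (x := 1) (y := r) (by simp) hrp.le hl2.le hl0.le
      (by ring)
    simpa [hd] using this
  have qd : (q ^ θ) ^ (1 / (n:ℝ)) = d ^ s := by
    rw [← Real.rpow_mul hqp.le, mul_comm, Real.rpow_mul hqp.le, qs, ← rθ,
      ← Real.rpow_mul hrp.le, ← Real.rpow_mul hrp.le, mul_comm]
  have hZ2 : X * q ^ θ ≤ Z := by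
    refine le_trans (le_of_eq ?_) hz
    rw [hYq, Real.mul_rpow hX.le hqp.le, ← mul_assoc, ← Real.rpow_add hX]
    simp
  calc _ = X ^ (1 / (n:ℝ)) * ((1 - l) + l * r ^ s) := by
        rw [hYq, Real.mul_rpow hX.le hqp.le, qs]; ring
    _ ≤ X ^ (1 / (n:ℝ)) * d ^ s := by gcongr
    _ = (X * q ^ θ) ^ (1 / (n:ℝ)) := by
        rw [Real.mul_rpow hX.le (by positivity), qd]
    _ ≤ _ := by gcongr

lemma main_lt (n : ℕ) (hn : 0 < n) (φ : (Fin n → ℝ) → ℝ)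
    (hφmeas : Measurable φ) (hφpos : ∀ x, 0 ≤ φ x)
    (hφuncond : Unconditional n φ)
    (hφlogconcave : ∀ x y : Fin n → ℝ, ∀ l : ℝ, l ∈ Set.Icc (0:ℝ) 1 →
      φ ((1 - l) • x + l • y) ≥ φ x ^ (1 - l) * φ y ^ l)
    (μ : Measure (Fin n → ℝ))
    (hμ : μ = volume.withDensity (fun x => ENNReal.ofReal (φ x)))
    (A : Set (Fin n → ℝ)) (hA : MeasurableSet A) (hAconv : Convex ℝ A)
    (hAuncond : ∀ (ε : Fin n → ℝ), (∀ i, ε i = 1 ∨ ε i = -1) →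
      ∀ x : Fin n → ℝ, ((fun i => ε i * x i) ∈ A ↔ x ∈ A))
    (a b : ℝ) (ha : 0 < a) (hab : a < b)
    (l : ℝ) (hl0 : 0 < l) (hl1 : l < 1) :
    ENNReal.ofReal (1 - l) * (μ (a • A)) ^ (1 / (n : ℝ)) +
      ENNReal.ofReal l * (μ (b • A)) ^ (1 / (n : ℝ)) ≤
    (μ (((1 - l) * a + l * b) • A)) ^ (1 / (n : ℝ)) := by
  have hn' : (0:ℝ) < n := by exact_mod_cast hn
  have hb : 0 < b := ha.trans hab
  have hl2 : 0 < 1 - l := by linarith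
  have hAu : ∀ ε : Fin n → ℝ, (∀ i, ε i = 1 ∨ ε i = -1) → ∀ x ∈ A, (fun i => ε i * x i) ∈ A :=
    fun ε hε x hx => (hAuncond ε hε x).2 hx
  have mono : ∀ p q : ℝ, 0 < p → p ≤ q → p • A ⊆ q • A := by
    intro p q hp hpq x hx
    rw [mem_smul_set_iff_inv_smul_mem₀ hp.ne'] at hx
    rw [mem_smul_set_iff_inv_smul_mem₀ (hp.trans_le hpq).ne']
    refine dom_mem hAconv hAu hx fun i => ?_
    have : q⁻¹ ≤ p⁻¹ := inv_anti₀ hp hpq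
    have hq : 0 < q := hp.trans_le hpq
    simp only [Pi.smul_apply, smul_eq_mul, abs_mul]
    rw [abs_of_pos (inv_pos.2 hp), abs_of_pos (inv_pos.2 hq)]
    gcongr
  set c := (1 - l) * a + l * b with hc
  have hac : a ≤ c := by rw [hc]; nlinarith
  have hcb : c ≤ b := by rw [hc]; nlinarith
  have hc0 : 0 < c := ha.trans_le hac
  have XY : μ (a • A) ≤ μ (b • A) := measure_mono (mono a b ha hab.le)
  have XZ : μ (a • A) ≤ μ (c • A) := measure_mono (mono a c ha hac)
  have ZY : μ (c • A) ≤ μ (b • A) := measure_mono (mono c b hc0 hcb)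
  have hr1 : 1 ≤ b / a := by rw [le_div_iff₀ ha]; linarith
  have hr0 : 0 < b / a := by positivity
  have YX : μ (b • A) ≤ ENNReal.ofReal ((b / a) ^ n) * μ (a • A) := by
    have e : b • A = (b / a) • (a • A) := by
      rw [smul_smul]; congr 1; field_simp
    rw [e, hμ, withDensity_apply _ ((hA.const_smul₀ a).const_smul₀ _),
      withDensity_apply _ (hA.const_smul₀ a)]
    have := lintegral_image_eq_lintegral_abs_det_fderiv_mul volume (hA.const_smul₀ a)
      (f := fun x : Fin n → ℝ => (b / a) • x)
      (f' := fun _ => (b / a) • ContinuousLinearMap.id ℝ (Fin n → ℝ))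
      (fun x _ => ((hasFDerivAt_id x).const_smul (b / a)).hasFDerivWithinAt)
      (fun x _ y _ h => smul_right_injective _ hr0.ne' h)
      (fun x => ENNReal.ofReal (φ x))
    rw [image_smul] at this
    rw [this, ← lintegral_const_mul _ hφmeas.ennreal_ofReal]
    refine lintegral_mono fun x => ?_
    have dt : |((b / a) • ContinuousLinearMap.id ℝ (Fin n → ℝ)).det| = (b / a) ^ n := by
      have : ((b / a) • ContinuousLinearMap.id ℝ (Fin n → ℝ)).det
          = LinearMap.det ((b / a) • (LinearMap.id : (Fin n → ℝ) →ₗ[ℝ] (Fin n → ℝ))) := rfl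
      rw [this, LinearMap.det_smul]
      simp [abs_of_pos hr0]
    simp only [dt]
    gcongr
    refine phi_dom hφpos hφuncond hφlogconcave fun i => ?_
    simp only [Pi.smul_apply, smul_eq_mul, abs_mul]
    rw [abs_of_pos hr0]
    exact le_mul_of_one_le_left (abs_nonneg _) hr1
  have npos : (0:ℝ) < 1 / n := by positivity
  by_cases X0 : μ (a • A) = 0
  · have Y0 : μ (b • A) = 0 := by
      rw [X0, mul_zero] at YX; exact le_antisymm YX zero_le
    rw [X0, Y0, ENNReal.zero_rpow_of_pos npos]; simp
  by_cases Xt : μ (a • A) = ⊤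
  · have Zt : μ (c • A) = ⊤ := top_le_iff.1 (Xt ▸ XZ)
    rw [Zt, ENNReal.top_rpow_of_pos npos]; exact le_top
  have Yt : μ (b • A) ≠ ⊤ := ne_top_of_le_ne_top (ENNReal.mul_ne_top ENNReal.ofReal_ne_top Xt) YX
  have Zt : μ (c • A) ≠ ⊤ := ne_top_of_le_ne_top Yt ZY
  have fin := real_final (a := a) (b := b) (l := l) (X := (μ (a • A)).toReal)
    (Y := (μ (b • A)).toReal) (Z := (μ (c • A)).toReal) hn ha hab hl0 hl1
    (ENNReal.toReal_pos X0 Xt) (ENNReal.toReal_mono Yt XY) (by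
      have := ENNReal.toReal_mono (ENNReal.mul_ne_top ENNReal.ofReal_ne_top Xt) YX
      rwa [ENNReal.toReal_mul, ENNReal.toReal_ofReal (by positivity)] at this) (by
      intro θ t0 t1 ht
      have := b_ineq n φ hφmeas hφpos hφuncond hφlogconcave μ hμ A hA hAconv hAuncond a b ha hb
        θ t0 t1
      rw [ht] at this
      have := ENNReal.toReal_mono Zt this
      rwa [ENNReal.toReal_mul, ← ENNReal.toReal_rpow, ← ENNReal.toReal_rpow] at this)
  rw [ENNReal.toReal_rpow, ENNReal.toReal_rpow, ENNReal.toReal_rpow] at fin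
  have tx := ENNReal.rpow_ne_top_of_nonneg npos.le Xt
  have ty := ENNReal.rpow_ne_top_of_nonneg npos.le Yt
  have tz := ENNReal.rpow_ne_top_of_nonneg npos.le Zt
  have := ENNReal.ofReal_le_ofReal fin
  rwa [ENNReal.ofReal_add (by positivity) (by positivity), ENNReal.ofReal_mul hl2.le,
    ENNReal.ofReal_mul hl0.le, ENNReal.ofReal_toReal tx, ENNReal.ofReal_toReal ty,
    ENNReal.ofReal_toReal tz] at this

/-- For μ an unconditional log-concave measure on ℝⁿ and A an unconditional
convex set, for all α₁, α₂ > 0 and l ∈ [0,1],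
μ((1-l)α₁A + lα₂A)^{1/n} ≥ (1-l)μ(α₁A)^{1/n} + lμ(α₂A)^{1/n}. -/
theorem stmt1 (n : ℕ) (hn : 0 < n) (φ : (Fin n → ℝ) → ℝ)
    (hφmeas : Measurable φ) (hφpos : ∀ x, 0 ≤ φ x)
    (hφuncond : Unconditional n φ)
    (hφlogconcave : ∀ x y : Fin n → ℝ, ∀ l : ℝ, l ∈ Set.Icc (0:ℝ) 1 →
      φ ((1 - l) • x + l • y) ≥ φ x ^ (1 - l) * φ y ^ l)
    (μ : Measure (Fin n → ℝ))
    (hμ : μ = volume.withDensity (fun x => ENNReal.ofReal (φ x)))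
    (A : Set (Fin n → ℝ)) (hA : MeasurableSet A) (hAconv : Convex ℝ A)
    (hAuncond : ∀ (ε : Fin n → ℝ), (∀ i, ε i = 1 ∨ ε i = -1) →
      ∀ x : Fin n → ℝ, ((fun i => ε i * x i) ∈ A ↔ x ∈ A))
    (α₁ α₂ : ℝ) (hα₁ : 0 < α₁) (hα₂ : 0 < α₂)
    (l : ℝ) (hl : l ∈ Set.Icc (0:ℝ) 1) :
    (μ ((1 - l) • (α₁ • A) + l • (α₂ • A))) ^ (1 / (n : ℝ)) ≥
      ENNReal.ofReal (1 - l) * (μ (α₁ • A)) ^ (1 / (n : ℝ)) +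
      ENNReal.ofReal l * (μ (α₂ • A)) ^ (1 / (n : ℝ)) := by
  have set_eq : (1 - l) • (α₁ • A) + l • (α₂ • A) = ((1 - l) * α₁ + l * α₂) • A := by
    have h1 : 0 ≤ (1 - l) * α₁ := mul_nonneg (by linarith [hl.2]) hα₁.le
    have h2 : 0 ≤ l * α₂ := mul_nonneg hl.1 hα₂.le
    rw [smul_smul, smul_smul, hAconv.add_smul h1 h2]
  rw [set_eq]
  rcases hl.1.eq_or_lt with h0 | h0
  · subst h0; simp
  rcases hl.2.eq_or_lt with h1 | h1
  · subst h1; simp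
  rcases lt_trichotomy α₁ α₂ with h | h | h
  · exact main_lt n hn φ hφmeas hφpos hφuncond hφlogconcave μ hμ A hA hAconv hAuncond α₁ α₂ hα₁ h
      l h0 h1
  · subst h
    rw [← add_mul, ← add_mul, ← ENNReal.ofReal_add (by linarith) h0.le]
    simp
  · have := main_lt n hn φ hφmeas hφpos hφuncond hφlogconcave μ hμ A hA hAconv hAuncond α₂ α₁ hα₂ h
      (1 - l) (by linarith) (by linarith)
    rw [sub_sub_cancel] at this
    rw [add_comm ((1 - l) * α₁), ge_iff_le, add_comm (ENNReal.ofReal (1 - l) * _)]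
    exact this
end

section
/- Let μ be a measure on ℝⁿ with density φ that is (-1/(n-1))-concave. Let A, B ⊂ ℝⁿ be Borel sets such that for some unit vector u, sup_{t∈ℝ} ∫_{A ∩ (u^⊥+tu)} φ = sup_{t∈ℝ} ∫_{B ∩ (u^⊥+tu)} φ (both finite). Then for every λ ∈ [0,1], μ((1-λ)A + λB) ≥ (1-λ)μ(A) + λμ(B). -/
open MeasureTheory Set Pointwise

lemma bm_compact_s7 (P Q : Set ℝ) (hP : IsCompact P) (hQ : IsCompact Q) (hPn : P.Nonempty)
    (hQn : Q.Nonempty) : volume P + volume Q ≤ volume (P + Q) := by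
  obtain ⟨p, hp, hpm⟩ := hP.exists_isGreatest hPn
  obtain ⟨q, hq, hqm⟩ := hQ.exists_isLeast hQn
  have h1 : volume ((fun x => q + x) '' P) = volume P := by
    rw [Set.image_add_left, measure_preimage_add]
  have h2 : volume ((fun x => p + x) '' Q) = volume Q := by
    rw [Set.image_add_left, measure_preimage_add]
  have hm : MeasurableSet ((fun x => p + x) '' Q) :=
    (hQ.image (continuous_const.add continuous_id)).measurableSet
  have hd : AEDisjoint volume ((fun x => q + x) '' P) ((fun x => p + x) '' Q) := by
    have : (((fun x => q + x) '' P) ∩ ((fun x => p + x) '' Q)) ⊆ {p + q} := by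
      rintro z ⟨⟨x, hx, rfl⟩, ⟨y, hy, hxy⟩⟩
      have a := hpm hx
      have b := hqm hy
      simp only [mem_singleton_iff] at *
      linarith
    exact measure_mono_null this (by simp)
  rw [← h1, ← h2, ← measure_union₀ hm.nullMeasurableSet hd]
  apply measure_mono
  rintro z (⟨x, hx, rfl⟩ | ⟨y, hy, rfl⟩)
  · exact ⟨x, hx, q, hq, add_comm _ _⟩
  · exact ⟨p, hp, y, hy, rfl⟩

lemma exists_cpt (P : Set ℝ) (hP : MeasurableSet P) (hPn : P.Nonempty) (r : ENNReal)
    (hr : r < volume P ∨ r = 0) : ∃ K ⊆ P, IsCompact K ∧ K.Nonempty ∧ r ≤ volume K := by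
  rcases hr with h | h
  · obtain ⟨K, hK, hc, hv⟩ := hP.exists_lt_isCompact h
    refine ⟨K, hK, hc, ?_, hv.le⟩
    rcases K.eq_empty_or_nonempty with rfl | h
    · simp at hv
    · exact h
  · obtain ⟨x, hx⟩ := hPn
    exact ⟨{x}, by simpa using hx, isCompact_singleton, singleton_nonempty x, by simp [h]⟩

lemma bm_one (P Q : Set ℝ) (hP : MeasurableSet P) (hQ : MeasurableSet Q) (hPn : P.Nonempty)
    (hQn : Q.Nonempty) : volume P + volume Q ≤ volume (P + Q) := by
  have key : ∀ r s : ENNReal, (r < volume P ∨ r = 0) → (s < volume Q ∨ s = 0) →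
      r + s ≤ volume (P + Q) := by
    intro r s hr hs
    obtain ⟨K, hK, hc, hn, hv⟩ := exists_cpt P hP hPn r hr
    obtain ⟨L, hL, hc', hn', hv'⟩ := exists_cpt Q hQ hQn s hs
    exact (add_le_add hv hv').trans ((bm_compact_s7 K L hc hc' hn hn').trans
      (measure_mono (Set.add_subset_add hK hL)))
  rcases eq_or_ne (volume P) 0 with h0 | h0
  · rw [h0, zero_add]
    refine le_of_forall_lt fun c hc => ?_
    obtain ⟨d, hd, hd'⟩ := exists_between hc
    exact hd.trans_le (by simpa using key 0 d (Or.inr rfl) (Or.inl hd'))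
  rcases eq_or_ne (volume Q) 0 with h1 | h1
  · rw [h1, add_zero]
    refine le_of_forall_lt fun c hc => ?_
    obtain ⟨d, hd, hd'⟩ := exists_between hc
    exact hd.trans_le (by simpa using key d 0 (Or.inl hd') (Or.inr rfl))
  refine le_of_forall_lt fun c hc => ?_
  obtain ⟨y, hy, z, hz, h⟩ := ENNReal.exists_lt_add_of_lt_add hc h0 h1
  exact h.trans_le (key y z (Or.inl hy) (Or.inl hz))

lemma bm_conv_s7 (P Q : Set ℝ) (hP : MeasurableSet P) (hQ : MeasurableSet Q) (hPn : P.Nonempty)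
    (hQn : Q.Nonempty) (l : ℝ) (hl : l ∈ Icc (0:ℝ) 1) :
    ENNReal.ofReal (1 - l) * volume P + ENNReal.ofReal l * volume Q ≤
      volume ((1 - l) • P + l • Q) := by
  have hs : ∀ (r : ℝ) (S : Set ℝ), 0 ≤ r → MeasurableSet S → S.Nonempty → MeasurableSet (r • S) := by
    intro r S hr hS hSn
    rcases eq_or_ne r 0 with rfl | h
    · rw [zero_smul_set hSn]; exact measurableSet_singleton _
    · exact hS.const_smul_of_ne_zero h
  have h := bm_one ((1 - l) • P) (l • Q) (hs _ _ (by linarith [hl.2]) hP hPn)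
    (hs _ _ hl.1 hQ hQn) hPn.smul_set hQn.smul_set
  simpa [Measure.addHaar_smul, abs_of_nonneg hl.1, abs_of_nonneg (sub_nonneg.2 hl.2)] using h

lemma layer (F : ℝ → ENNReal) (hF : Measurable F) (h1 : ∀ x, F x ≤ 1) :
    ∫⁻ x, F x = ∫⁻ θ in Ioo (0:ℝ) 1, volume {x | ENNReal.ofReal θ < F x} := by
  have h := lintegral_eq_lintegral_meas_lt (μ := (volume : Measure ℝ)) (f := fun x => (F x).toReal)
    (Filter.Eventually.of_forall fun x => ENNReal.toReal_nonneg) hF.ennreal_toReal.aemeasurable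
  have hfin : ∀ x, F x ≠ ⊤ := fun x => ((h1 x).trans_lt ENNReal.one_lt_top).ne
  simp only [ENNReal.ofReal_toReal (hfin _)] at h
  rw [h, ← Ioo_union_Ici_eq_Ioi zero_lt_one, lintegral_union measurableSet_Ici]
  · have h2 : ∫⁻ θ in Ici (1:ℝ), volume {a | θ < (F a).toReal} = 0 := by
      rw [setLIntegral_congr_fun (g := fun _ => 0) measurableSet_Ici]
      · simp
      · intro θ hθ
        have : {a | θ < (F a).toReal} = ∅ := by
          ext a
          simp only [mem_ofPred_eq, mem_empty_iff_false, iff_false, not_lt]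
          refine le_trans ?_ hθ
          simpa using ENNReal.toReal_mono ENNReal.one_ne_top (h1 a)
        simp [this]
    rw [h2, add_zero]
    refine setLIntegral_congr_fun measurableSet_Ioo ?_
    intro θ hθ
    simp only [ENNReal.ofReal_lt_iff_lt_toReal hθ.1.le (hfin _)]
  · exact Set.disjoint_left.2 fun x hx hx' => absurd hx.2 (not_lt.2 hx')

lemma oneD (l : ℝ) (hl : l ∈ Icc (0:ℝ) 1) (F G H : ℝ → ENNReal) (hF : Measurable F)
    (hG : Measurable G) (hH : Measurable H) (hF1 : ∀ x, F x ≤ 1) (hG1 : ∀ x, G x ≤ 1)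
    (hFn : ∀ θ ∈ Ioo (0:ℝ) 1, ∃ x, ENNReal.ofReal θ < F x)
    (hGn : ∀ θ ∈ Ioo (0:ℝ) 1, ∃ x, ENNReal.ofReal θ < G x)
    (h : ∀ θ ∈ Ioo (0:ℝ) 1, ∀ x y, ENNReal.ofReal θ < F x → ENNReal.ofReal θ < G y →
      ENNReal.ofReal θ ≤ H ((1 - l) * x + l * y)) :
    ENNReal.ofReal (1 - l) * (∫⁻ x, F x) + ENNReal.ofReal l * (∫⁻ x, G x) ≤ ∫⁻ x, H x := by
  have hH' : ∫⁻ θ in Ioo (0:ℝ) 1, volume {x | ENNReal.ofReal θ ≤ H x} ≤ ∫⁻ x, H x := by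
    have e := lintegral_eq_lintegral_meas_le (μ := (volume : Measure ℝ))
      (f := fun x => (min (H x) 1).toReal)
      (Filter.Eventually.of_forall fun x => ENNReal.toReal_nonneg)
      (hH.min measurable_const).ennreal_toReal.aemeasurable
    have hfin : ∀ x, min (H x) 1 ≠ ⊤ := fun x => ((min_le_right _ _).trans_lt ENNReal.one_lt_top).ne
    simp only [ENNReal.ofReal_toReal (hfin _)] at e
    calc _ = ∫⁻ θ in Ioo (0:ℝ) 1, volume {x | θ ≤ (min (H x) 1).toReal} := by
          refine setLIntegral_congr_fun measurableSet_Ioo ?_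
          intro θ hθ
          simp only [← ENNReal.ofReal_le_iff_le_toReal (hfin _), le_min_iff]
          congr 1; ext x
          simp [hθ.2.le]
      _ ≤ ∫⁻ θ in Ioi (0:ℝ), volume {x | θ ≤ (min (H x) 1).toReal} :=
          lintegral_mono_set fun x hx => hx.1
      _ ≤ ∫⁻ x, H x := e ▸ lintegral_mono fun x => min_le_left _ _
  refine le_trans ?_ hH'
  rw [layer F hF hF1, layer G hG hG1, ← lintegral_const_mul' _ _ ENNReal.ofReal_ne_top,
    ← lintegral_const_mul' _ _ ENNReal.ofReal_ne_top]
  refine (le_lintegral_add _ _).trans (setLIntegral_mono' measurableSet_Ioo ?_)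
  intro θ hθ
  refine (bm_conv_s7 _ _ (measurableSet_lt measurable_const hF) (measurableSet_lt measurable_const hG)
    (hFn θ hθ) (hGn θ hθ) l hl).trans (measure_mono ?_)
  rintro z ⟨_, ⟨x, hx, rfl⟩, _, ⟨y, hy, rfl⟩, rfl⟩
  exact h θ hθ x y hx hy

lemma oneD_scaled (l : ℝ) (hl : l ∈ Icc (0:ℝ) 1) (F G H : ℝ → ENNReal) (hF : Measurable F)
    (hG : Measurable G) (hH : Measurable H) (a b D : ENNReal) (ha : ⨆ x, F x = a)
    (hb : ⨆ x, G x = b) (ha0 : a ≠ 0) (hb0 : b ≠ 0) (haT : a ≠ ⊤) (hbT : b ≠ ⊤)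
    (hD0 : D ≠ 0) (hDT : D ≠ ⊤)
    (h : ∀ θ ∈ Ioo (0:ℝ) 1, ∀ x y, ENNReal.ofReal θ * a < F x → ENNReal.ofReal θ * b < G y →
      ENNReal.ofReal θ * D ≤ H ((1 - l) * x + l * y)) :
    D * (ENNReal.ofReal (1 - l) * ((∫⁻ x, F x) / a) + ENNReal.ofReal l * ((∫⁻ x, G x) / b))
      ≤ ∫⁻ x, H x := by
  have hn : ∀ (F : ℝ → ENNReal) (a : ENNReal), ⨆ x, F x = a → a ≠ 0 → a ≠ ⊤ →
      ∀ θ ∈ Ioo (0:ℝ) 1, ∃ x, ENNReal.ofReal θ < F x / a := by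
    intro F a ha h0 hT θ hθ
    have : ENNReal.ofReal θ * a < ⨆ x, F x := by
      rw [ha]
      have h1 : ENNReal.ofReal θ < 1 := by simpa using hθ.2
      simpa using ENNReal.mul_lt_mul_left h0 hT h1
    obtain ⟨x, hx⟩ := lt_iSup_iff.1 this
    exact ⟨x, by rwa [ENNReal.lt_div_iff_mul_lt (Or.inl h0) (Or.inl hT)]⟩
  have key := oneD l hl (fun x => F x / a) (fun x => G x / b) (fun x => H x / D)
    (hF.div_const a) (hG.div_const b) (hH.div_const D)
    (fun x => ENNReal.div_le_of_le_mul (by rw [one_mul, ← ha]; exact le_iSup F x))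
    (fun x => ENNReal.div_le_of_le_mul (by rw [one_mul, ← hb]; exact le_iSup G x))
    (hn F a ha ha0 haT) (hn G b hb hb0 hbT)
    (fun θ hθ x y hx hy => by
      rw [ENNReal.lt_div_iff_mul_lt (Or.inl ha0) (Or.inl haT)] at hx
      rw [ENNReal.lt_div_iff_mul_lt (Or.inl hb0) (Or.inl hbT)] at hy
      rw [ENNReal.le_div_iff_mul_le (Or.inl hD0) (Or.inl hDT)]
      exact h θ hθ x y hx hy)
  simp only [div_eq_mul_inv] at key ⊢
  rw [lintegral_mul_const _ hF, lintegral_mul_const _ hG, lintegral_mul_const _ hH,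
    ← div_eq_mul_inv (∫⁻ x, H x), ENNReal.le_div_iff_mul_le (Or.inl hD0) (Or.inl hDT)] at key
  rwa [mul_comm]

/-- the scale-invariant form of the hypothesis of Borell-Brascamp-Lieb with exponent `-1/k`. -/
def CC {E : Type*} [AddCommGroup E] [Module ℝ E] (l : ℝ) (k : ℕ) (f g h : E → ENNReal) : Prop :=
  ∀ x y, ∀ c α β : ℝ, 0 < c → 0 < α → 0 < β → ENNReal.ofReal (c / α ^ k) < f x →
    ENNReal.ofReal (c / β ^ k) < g y →
    ENNReal.ofReal (c / ((1 - l) * α + l * β) ^ k) ≤ h ((1 - l) • x + l • y)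

lemma conv_pos (l : ℝ) (hl : l ∈ Icc (0:ℝ) 1) (α β : ℝ) (hα : 0 < α) (hβ : 0 < β) :
    0 < (1 - l) * α + l * β := by
  rcases hl.1.eq_or_lt with h | h
  · simp [← h, hα]
  · have := mul_nonneg (sub_nonneg.2 hl.2) hα.le
    have := mul_pos h hβ
    linarith

lemma real_ineq (l : ℝ) (hl : l ∈ Icc (0:ℝ) 1) (k : ℕ) (α β p q : ℝ) (hα : 0 < α) (hβ : 0 < β)
    (hp : 0 < p) (hq : 0 < q) :
    ((1 - l) * α + l * β) ^ (k + 1) ≤ ((1 - l) * p + l * q) ^ k *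
      ((1 - l) * (α ^ (k + 1) / p ^ k) + l * (β ^ (k + 1) / q ^ k)) := by
  have hS := conv_pos l hl p q hp hq
  set S := (1 - l) * p + l * q with hSdef
  have J := (convexOn_pow (𝕜 := ℝ) (k + 1)).2 (div_pos hα hp).le (div_pos hβ hq).le
    (div_nonneg (mul_nonneg (sub_nonneg.2 hl.2) hp.le) hS.le)
    (div_nonneg (mul_nonneg hl.1 hq.le) hS.le)
    (by rw [← add_div, ← hSdef, div_self hS.ne'])
  simp only [smul_eq_mul] at J
  have e1 : (1 - l) * p / S * (α / p) + l * q / S * (β / q) = ((1 - l) * α + l * β) / S := by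
    field_simp
  have e2 : (1 - l) * p / S * (α / p) ^ (k + 1) + l * q / S * (β / q) ^ (k + 1) =
      ((1 - l) * (α ^ (k + 1) / p ^ k) + l * (β ^ (k + 1) / q ^ k)) / S := by
    rw [div_pow, div_pow, pow_succ p, pow_succ q]
    field_simp
  rw [e1, e2, div_pow, div_le_div_iff₀ (by positivity) hS, pow_succ S] at J
  refine le_of_mul_le_mul_right ?_ hS
  linarith

lemma exists_root (k : ℕ) (c a : ℝ) (hc : 0 < c) (ha : 0 < a) :
    ∃ α : ℝ, 0 < α ∧ a = c / α ^ (k + 1) := by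
  refine ⟨(c / a) ^ (((k + 1 : ℕ) : ℝ)⁻¹), by positivity, ?_⟩
  rw [Real.rpow_inv_natCast_pow (by positivity) (by simp)]
  field_simp

lemma exists_trunc (f : ℝ → ENNReal) (L : ENNReal) (h : L < ∫⁻ x, f x) :
    ∃ f₀ : ℝ → ENNReal, Measurable f₀ ∧ (∀ x, f₀ x ≤ f x) ∧ L < ∫⁻ x, f₀ x ∧
      (⨆ x, f₀ x) ≠ ⊤ ∧ (⨆ x, f₀ x) ≠ 0 := by
  simp_rw [lintegral_eq_nnreal, lt_iSup_iff] at h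
  obtain ⟨g, hg, gL⟩ := h
  rw [← SimpleFunc.lintegral_eq_lintegral] at gL
  refine ⟨fun x => g x, g.measurable.coe_nnreal_ennreal, hg, by simpa using gL, ?_, ?_⟩
  · obtain ⟨C, hC⟩ := g.finite_range.bddAbove
    refine ((iSup_le fun x => ?_).trans_lt (ENNReal.coe_lt_top (r := C))).ne
    exact ENNReal.coe_le_coe.2 (hC ⟨x, rfl⟩)
  · intro h0
    simp only [ENNReal.iSup_eq_zero, ENNReal.coe_eq_zero] at h0
    simp [h0] at gL

lemma step (l : ℝ) (hl : l ∈ Icc (0:ℝ) 1) (k : ℕ) (f g h : ℝ → ENNReal) (hh : Measurable h)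
    (H : CC l (k + 1) f g h) (c p q : ℝ) (hc : 0 < c) (hp : 0 < p) (hq : 0 < q)
    (hf : ENNReal.ofReal (c / p ^ k) < ∫⁻ x, f x) (hg : ENNReal.ofReal (c / q ^ k) < ∫⁻ x, g x) :
    ENNReal.ofReal (c / ((1 - l) * p + l * q) ^ k) ≤ ∫⁻ x, h x := by
  obtain ⟨f₀, mf, lf, If, haT, ha0⟩ := exists_trunc f _ hf
  obtain ⟨g₀, mg, lg, Ig, hbT, hb0⟩ := exists_trunc g _ hg
  obtain ⟨α, hα, eα⟩ := exists_root k c _ hc (ENNReal.toReal_pos ha0 haT)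
  obtain ⟨β, hβ, eβ⟩ := exists_root k c _ hc (ENNReal.toReal_pos hb0 hbT)
  have hA := conv_pos l hl α β hα hβ
  have hS := conv_pos l hl p q hp hq
  have ea : ⨆ x, f₀ x = ENNReal.ofReal (c / α ^ (k + 1)) := by rw [← eα, ENNReal.ofReal_toReal haT]
  have eb : ⨆ x, g₀ x = ENNReal.ofReal (c / β ^ (k + 1)) := by rw [← eβ, ENNReal.ofReal_toReal hbT]
  have pos : ∀ z : ℝ, 0 < z → ENNReal.ofReal (c / z ^ (k + 1)) ≠ 0 := fun z hz => by
    have : 0 < c / z ^ (k + 1) := by positivity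
    simpa using this
  have key := oneD_scaled l hl f₀ g₀ h mf mg hh _ _
    (ENNReal.ofReal (c / ((1 - l) * α + l * β) ^ (k + 1))) ea eb (pos _ hα) (pos _ hβ)
    ENNReal.ofReal_ne_top ENNReal.ofReal_ne_top (pos _ hA) ENNReal.ofReal_ne_top (by
      intro θ hθ x y hx hy
      rw [← ENNReal.ofReal_mul hθ.1.le, ← mul_div_assoc] at hx hy ⊢
      exact H x y (θ * c) α β (mul_pos hθ.1 hc) hα hβ (hx.trans_le (lf x)) (hy.trans_le (lg y)))
  refine le_trans ?_ key
  have hl1 : 0 ≤ 1 - l := sub_nonneg.2 hl.2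
  calc ENNReal.ofReal (c / ((1 - l) * p + l * q) ^ k)
      ≤ ENNReal.ofReal (c / ((1 - l) * α + l * β) ^ (k + 1) *
          ((1 - l) * ((c / p ^ k) / (c / α ^ (k + 1))) + l * ((c / q ^ k) / (c / β ^ (k + 1))))) := by
        apply ENNReal.ofReal_le_ofReal
        have e := real_ineq l hl k α β p q hα hβ hp hq
        have e1 : (c / p ^ k) / (c / α ^ (k + 1)) = α ^ (k + 1) / p ^ k := by field_simp
        have e2 : (c / q ^ k) / (c / β ^ (k + 1)) = β ^ (k + 1) / q ^ k := by field_simp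
        rw [e1, e2, div_mul_eq_mul_div, div_le_div_iff₀ (by positivity) (by positivity)]
        have := mul_le_mul_of_nonneg_left e hc.le
        linarith
    _ = ENNReal.ofReal (c / ((1 - l) * α + l * β) ^ (k + 1)) *
        (ENNReal.ofReal (1 - l) * (ENNReal.ofReal (c / p ^ k) / ENNReal.ofReal (c / α ^ (k + 1))) +
          ENNReal.ofReal l * (ENNReal.ofReal (c / q ^ k) / ENNReal.ofReal (c / β ^ (k + 1)))) := by
        rw [ENNReal.ofReal_mul (by positivity), ENNReal.ofReal_add, ENNReal.ofReal_mul hl1,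
          ENNReal.ofReal_mul hl.1, ENNReal.ofReal_div_of_pos (x := c / p ^ k),
          ENNReal.ofReal_div_of_pos (x := c / q ^ k)]
        all_goals first | positivity | exact mul_nonneg hl1 (by positivity) | exact mul_nonneg hl.1 (by positivity)
    _ ≤ _ := by gcongr

lemma bbl_pi (l : ℝ) (hl : l ∈ Icc (0:ℝ) 1) (m : ℕ) : ∀ (j : ℕ) (f g h : (Fin m → ℝ) → ENNReal),
    Measurable f → Measurable g → Measurable h → CC l (m + j) f g h →
    ∀ (c p q : ℝ), 0 < c → 0 < p → 0 < q →
    ENNReal.ofReal (c / p ^ j) < ∫⁻ x, f x → ENNReal.ofReal (c / q ^ j) < ∫⁻ x, g x →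
    ENNReal.ofReal (c / ((1 - l) * p + l * q) ^ j) ≤ ∫⁻ x, h x := by
  induction m with
  | zero =>
    intro j f g h hf hg hh H c p q hc hp hq If Ig
    have e : ∀ f : (Fin 0 → ℝ) → ENNReal, ∫⁻ x, f x = f 0 := by
      intro f
      rw [lintegral_unique, volume_pi, Measure.pi_of_empty]
      simp only [Measure.dirac_apply_of_mem (mem_univ _), mul_one]
      exact congrArg f (Subsingleton.elim _ _)
    rw [e] at *
    have := H 0 0 c p q hc hp hq (by simpa using If) (by simpa using Ig)
    simpa using this
  | succ m ih =>
    intro j f g h hf hg hh H c p q hc hp hq If Ig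
    have mp := (volume_preserving_piFinSuccAbove (fun _ : Fin (m + 1) => ℝ) 0).symm
    have e : ∀ f : (Fin (m + 1) → ℝ) → ENNReal, Measurable f →
        ∫⁻ x, f x = ∫⁻ y : Fin m → ℝ, ∫⁻ s : ℝ, f (Fin.cons s y) := by
      intro f hf
      rw [← mp.lintegral_comp hf, Measure.volume_eq_prod, lintegral_prod_symm']
      · simp [MeasurableEquiv.piFinSuccAbove, Fin.insertNthEquiv]
      · exact hf.comp mp.measurable
    have mc : Measurable fun z : (Fin m → ℝ) × ℝ => (Fin.cons z.2 z.1 : Fin (m + 1) → ℝ) := by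
      refine measurable_pi_lambda _ fun i => ?_
      refine Fin.cases ?_ (fun i => ?_) i
      · simpa using measurable_snd
      · simp only [Fin.cons_succ]
        fun_prop
    have ms : ∀ f : (Fin (m + 1) → ℝ) → ENNReal, Measurable f →
        Measurable fun y : Fin m → ℝ => ∫⁻ s : ℝ, f (Fin.cons s y) := by
      intro f hf
      exact (hf.comp mc).lintegral_prod_right'
    rw [e f hf] at If
    rw [e g hg] at Ig
    rw [e h hh]
    refine ih j _ _ _ (ms f hf) (ms g hg) (ms h hh) ?_ c p q hc hp hq If Ig
    intro y₁ y₂ c α β hc hα hβ h1 h2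
    refine step l hl (m + j) (fun s => f (Fin.cons s y₁)) (fun s => g (Fin.cons s y₂)) _
      (hh.comp (mc.comp measurable_prodMk_left)) ?_ c α β hc hα hβ h1 h2
    intro x y c α β hc hα hβ h1 h2
    have := H _ _ c α β hc hα hβ (by convert h1 using 4; ring) (by convert h2 using 4; ring)
    have e1 : m + 1 + j = m + j + 1 := by ring
    have e2 : (1 - l) • (Fin.cons x y₁ : Fin (m + 1) → ℝ) + l • (Fin.cons y y₂ : Fin (m + 1) → ℝ) =
        Fin.cons ((1 - l) • x + l • y) ((1 - l) • y₁ + l • y₂) := by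
      ext i
      refine Fin.cases ?_ (fun i => ?_) i <;> simp
    rwa [e1, e2] at this

lemma bbl_V {V : Type*} [NormedAddCommGroup V] [InnerProductSpace ℝ V] [FiniteDimensional ℝ V]
    [MeasurableSpace V] [BorelSpace V] (m : ℕ) (hm : Module.finrank ℝ V = m)
    (l : ℝ) (hl : l ∈ Icc (0:ℝ) 1) (f g h : V → ENNReal)
    (hf : Measurable f) (hg : Measurable g) (hh : Measurable h) (H : CC l m f g h)
    (c : ℝ) (hc : 0 < c)
    (If : ENNReal.ofReal c < ∫⁻ x, f x) (Ig : ENNReal.ofReal c < ∫⁻ x, g x) :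
    ENNReal.ofReal c ≤ ∫⁻ x, h x := by
  subst hm
  have mp : MeasurePreserving (fun x : Fin (Module.finrank ℝ V) → ℝ =>
      (stdOrthonormalBasis ℝ V).repr.symm (WithLp.toLp 2 x)) volume volume :=
    (stdOrthonormalBasis ℝ V).measurePreserving_repr_symm.comp
      (PiLp.volume_preserving_toLp (Fin (Module.finrank ℝ V)))
  rw [← mp.lintegral_comp hf] at If
  rw [← mp.lintegral_comp hg] at Ig
  rw [← mp.lintegral_comp hh]
  have := bbl_pi l hl _ 0 _ _ _ (hf.comp mp.measurable) (hg.comp mp.measurable)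
    (hh.comp mp.measurable) ?_ c 1 1 hc one_pos one_pos (by simpa using If) (by simpa using Ig)
  · simpa using this
  · intro x y c α β hc hα hβ h1 h2
    have := H _ _ c α β hc hα hβ h1 h2
    simpa using this

section fubini
variable {E : Type*} [NormedAddCommGroup E] [InnerProductSpace ℝ E] [FiniteDimensional ℝ E]
    [MeasurableSpace E] [BorelSpace E]

lemma fub (u : E) (hu : ‖u‖ = 1) (f : E → ENNReal) (hf : Measurable f) :
    ∫⁻ x, f x = ∫⁻ t : ℝ, ∫⁻ w : ((Submodule.span ℝ {u})ᗮ : Submodule ℝ E), f ((w : E) + t • u) := by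
  set K := Submodule.span ℝ {u}
  have mp1 : MeasurePreserving (fun z : K × Kᗮ => K.orthogonalDecomposition.symm (WithLp.toLp 2 z))
      volume volume :=
    K.orthogonalDecomposition.symm.measurePreserving.comp (WithLp.volume_preserving_toLp _ _)
  have mp2 : MeasurePreserving (LinearIsometryEquiv.toSpanUnitSingleton (𝕜 := ℝ) u hu)
      volume volume := LinearIsometryEquiv.measurePreserving _
  rw [← mp1.lintegral_comp hf, Measure.volume_eq_prod, lintegral_prod,
    ← mp2.lintegral_comp]
  · refine lintegral_congr fun t => lintegral_congr fun w => ?_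
    congr 1
    change K.orthogonalDecomposition.symm (WithLp.toLp 2
      (LinearIsometryEquiv.toSpanUnitSingleton (𝕜 := ℝ) u hu t, w)) = _
    simp [add_comm]
  · exact (hf.comp mp1.measurable).lintegral_prod_right'
  · exact (hf.comp mp1.measurable).aemeasurable

lemma meas_sec (u : E) (f : E → ENNReal) (hf : Measurable f) :
    Measurable fun t : ℝ => ∫⁻ w : ((Submodule.span ℝ {u})ᗮ : Submodule ℝ E), f ((w : E) + t • u) := by
  refine Measurable.lintegral_prod_right' (f := fun z : ℝ × ((Submodule.span ℝ {u})ᗮ : Submodule ℝ E) => f ((z.2 : E) + z.1 • u)) ?_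
  exact hf.comp (by fun_prop)
end fubini

lemma CC_of_conc (n : ℕ) (hn : 2 ≤ n) (l : ℝ) (hl : l ∈ Icc (0:ℝ) 1) (a b z c α β : ℝ)
    (ha : 0 < a) (hb : 0 < b)
    (h : z ≥ ((1 - l) * a ^ (-(1 / ((n : ℝ) - 1))) + l * b ^ (-(1 / ((n : ℝ) - 1)))) ^
            (1 / (-(1 / ((n : ℝ) - 1)))))
    (hc : 0 < c) (hα : 0 < α) (hβ : 0 < β) (h1 : c / α ^ (n - 1) < a) (h2 : c / β ^ (n - 1) < b) :
    c / ((1 - l) * α + l * β) ^ (n - 1) ≤ z := by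
  obtain ⟨k, rfl⟩ : ∃ k, n = k + 2 := ⟨n - 2, by omega⟩
  have hk : ((k + 2 : ℕ) : ℝ) - 1 = ((k + 1 : ℕ) : ℝ) := by push_cast; ring
  rw [hk] at h
  have hk' : k + 2 - 1 = k + 1 := by omega
  rw [hk'] at *
  have hkp : (0:ℝ) < ((k + 1 : ℕ) : ℝ) := by positivity
  set s : ℝ := -(1 / ((k + 1 : ℕ) : ℝ)) with hs
  have hs0 : s ≤ 0 := by rw [hs]; simp only [Left.neg_nonpos_iff]; positivity
  have es : 1 / s = -((k + 1 : ℕ) : ℝ) := by rw [hs]; field_simp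
  have root : ∀ a α : ℝ, 0 < a → 0 < α → c / α ^ (k + 1) < a → a ^ s ≤ c ^ s * α := by
    intro a α ha hα h1
    have := Real.rpow_le_rpow_of_nonpos (by positivity) h1.le hs0
    refine this.trans (le_of_eq ?_)
    rw [Real.div_rpow hc.le (by positivity), ← Real.rpow_natCast, ← Real.rpow_mul hα.le]
    have : ((k + 1 : ℕ) : ℝ) * s = -1 := by rw [hs]; field_simp
    rw [this, Real.rpow_neg_one]; field_simp
  have hA := conv_pos l hl α β hα hβ
  refine le_trans ?_ h
  have hpos : 0 < (1 - l) * a ^ s + l * b ^ s := conv_pos l hl _ _ (by positivity) (by positivity)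
  have hle : (1 - l) * a ^ s + l * b ^ s ≤ c ^ s * ((1 - l) * α + l * β) := by
    have e1 := mul_le_mul_of_nonneg_left (root a α ha hα h1) (sub_nonneg.2 hl.2)
    have e2 := mul_le_mul_of_nonneg_left (root b β hb hβ h2) hl.1
    linarith
  refine le_trans (le_of_eq ?_) (Real.rpow_le_rpow_of_nonpos hpos hle (by rw [es]; linarith))
  rw [Real.mul_rpow (by positivity) hA.le, ← Real.rpow_mul hc.le, es,
    Real.rpow_neg hA.le, Real.rpow_natCast, div_eq_mul_inv]
  have : s * -((k + 1 : ℕ) : ℝ) = 1 := by rw [hs]; field_simp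
  rw [this, Real.rpow_one]

/-- Let μ have a (-1/(n-1))-concave density φ on ℝⁿ, and A, B Borel sets
having, for some unit vector u, equal (finite) maximal φ-measure of hyperplane sections
orthogonal to u. Then μ((1-l)A + lB) ≥ (1-l)μ(A) + lμ(B). -/
theorem stmt7 (n : ℕ) (hn : 2 ≤ n) (φ : EuclideanSpace ℝ (Fin n) → ℝ)
    (hφmeas : Measurable φ) (hφpos : ∀ x, 0 ≤ φ x)
    (hφconc : ∀ x y : EuclideanSpace ℝ (Fin n), 0 < φ x → 0 < φ y →
      ∀ l : ℝ, l ∈ Set.Icc (0:ℝ) 1 →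
        φ ((1 - l) • x + l • y) ≥
          ((1 - l) * φ x ^ (-(1 / ((n : ℝ) - 1))) + l * φ y ^ (-(1 / ((n : ℝ) - 1)))) ^
            (1 / (-(1 / ((n : ℝ) - 1)))))
    (μ : Measure (EuclideanSpace ℝ (Fin n)))
    (hμ : μ = volume.withDensity (fun x => ENNReal.ofReal (φ x)))
    (A B : Set (EuclideanSpace ℝ (Fin n))) (hA : MeasurableSet A) (hB : MeasurableSet B)
    (u : EuclideanSpace ℝ (Fin n)) (hu : ‖u‖ = 1)
    (hfin : (⨆ t : ℝ, ∫⁻ w : ((Submodule.span ℝ {u})ᗮ : Submodule ℝ (EuclideanSpace ℝ (Fin n))),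
        (ENNReal.ofReal (φ ((w : EuclideanSpace ℝ (Fin n)) + t • u)) * A.indicator 1 ((w : EuclideanSpace ℝ (Fin n)) + t • u))) ≠ ⊤)
    (hsec : (⨆ t : ℝ, ∫⁻ w : ((Submodule.span ℝ {u})ᗮ : Submodule ℝ (EuclideanSpace ℝ (Fin n))),
        (ENNReal.ofReal (φ ((w : EuclideanSpace ℝ (Fin n)) + t • u)) * A.indicator 1 ((w : EuclideanSpace ℝ (Fin n)) + t • u))) =
      (⨆ t : ℝ, ∫⁻ w : ((Submodule.span ℝ {u})ᗮ : Submodule ℝ (EuclideanSpace ℝ (Fin n))),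
        (ENNReal.ofReal (φ ((w : EuclideanSpace ℝ (Fin n)) + t • u)) * B.indicator 1 ((w : EuclideanSpace ℝ (Fin n)) + t • u))))
    (l : ℝ) (hl : l ∈ Set.Icc (0:ℝ) 1) :
    μ ((1 - l) • A + l • B) ≥
      ENNReal.ofReal (1 - l) * μ A + ENNReal.ofReal l * μ B := by
  have mφ : Measurable fun x => ENNReal.ofReal (φ x) := hφmeas.ennreal_ofReal
  have mf : ∀ S : Set (EuclideanSpace ℝ (Fin n)), MeasurableSet S →
      Measurable fun x => ENNReal.ofReal (φ x) * S.indicator 1 x := fun S hS =>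
    mφ.mul (measurable_one.indicator hS)
  have eμ : ∀ S : Set (EuclideanSpace ℝ (Fin n)), MeasurableSet S →
      μ S = ∫⁻ t : ℝ, ∫⁻ w : ((Submodule.span ℝ {u})ᗮ : Submodule ℝ (EuclideanSpace ℝ (Fin n))),
        (ENNReal.ofReal (φ ((w : EuclideanSpace ℝ (Fin n)) + t • u)) *
          S.indicator 1 ((w : EuclideanSpace ℝ (Fin n)) + t • u)) := by
    intro S hS
    rw [hμ, withDensity_apply _ hS, ← lintegral_indicator hS, ← fub u hu _ (mf S hS)]
    refine lintegral_congr fun x => ?_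
    by_cases hx : x ∈ S <;> simp [hx]
  set S := toMeasurable μ ((1 - l) • A + l • B) with hSdef
  have hS : MeasurableSet S := measurableSet_toMeasurable _ _
  have hsub : (1 - l) • A + l • B ⊆ S := subset_toMeasurable _ _
  rw [← measure_toMeasurable ((1 - l) • A + l • B), ← hSdef, eμ A hA, eμ B hB, eμ S hS]
  set F : Set (EuclideanSpace ℝ (Fin n)) → ℝ → ENNReal := fun S t =>
    ∫⁻ w : ((Submodule.span ℝ {u})ᗮ : Submodule ℝ (EuclideanSpace ℝ (Fin n))),
        (ENNReal.ofReal (φ ((w : EuclideanSpace ℝ (Fin n)) + t • u)) *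
          S.indicator 1 ((w : EuclideanSpace ℝ (Fin n)) + t • u)) with hF
  change (⨆ t, F A t) ≠ ⊤ at hfin
  change (⨆ t, F A t) = ⨆ t, F B t at hsec
  change ENNReal.ofReal (1 - l) * (∫⁻ t, F A t) + ENNReal.ofReal l * (∫⁻ t, F B t) ≤ ∫⁻ t, F S t
  have mF : ∀ S, MeasurableSet S → Measurable (F S) := fun S hS => meas_sec u _ (mf S hS)
  have main : ∀ (c : ℝ), 0 < c → ∀ s t, ENNReal.ofReal c < F A s → ENNReal.ofReal c < F B t →
      ENNReal.ofReal c ≤ F S ((1 - l) * s + l * t) := by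
    intro c hc s t h1 h2
    have hd : Module.finrank ℝ ((Submodule.span ℝ {u})ᗮ : Submodule ℝ (EuclideanSpace ℝ (Fin n)))
        = n - 1 := by
      have h := Submodule.finrank_add_finrank_orthogonal (Submodule.span ℝ {u})
      rw [finrank_span_singleton (by rintro rfl; simp at hu), finrank_euclideanSpace_fin] at h
      omega
    have msec : ∀ (t : ℝ) (S : Set (EuclideanSpace ℝ (Fin n))), MeasurableSet S → Measurable
        fun w : ((Submodule.span ℝ {u})ᗮ : Submodule ℝ (EuclideanSpace ℝ (Fin n))) =>
        (ENNReal.ofReal (φ ((w : EuclideanSpace ℝ (Fin n)) + t • u)) *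
          S.indicator 1 ((w : EuclideanSpace ℝ (Fin n)) + t • u)) := fun t S hS =>
      (mf S hS).comp (g := fun x => ENNReal.ofReal (φ x) * S.indicator 1 x)
        (f := fun w : ((Submodule.span ℝ {u})ᗮ : Submodule ℝ (EuclideanSpace ℝ (Fin n))) =>
          (w : EuclideanSpace ℝ (Fin n)) + t • u) (by fun_prop)
    refine bbl_V (n - 1) hd l hl _ _ _ (msec s A hA) (msec t B hB) (msec _ S hS) ?_ c hc h1 h2
    intro x y c α β hc hα hβ h1 h2
    have ex : ∀ (C : Set (EuclideanSpace ℝ (Fin n))) x (r : ℝ), 0 ≤ r →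
        ENNReal.ofReal r < ENNReal.ofReal (φ x) * C.indicator 1 x → x ∈ C ∧ r < φ x := by
      intro C x r hr h
      by_cases hx : x ∈ C
      · simp only [hx, indicator_of_mem, Pi.one_apply, mul_one] at h
        exact ⟨hx, (ENNReal.ofReal_lt_ofReal_iff_of_nonneg hr).1 h⟩
      · simp [hx] at h
    obtain ⟨hxA, hx⟩ := ex A _ _ (by positivity) h1
    obtain ⟨hyB, hy⟩ := ex B _ _ (by positivity) h2
    have hx0 := lt_of_le_of_lt (by positivity) hx
    have hy0 := lt_of_le_of_lt (by positivity) hy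
    have hz := CC_of_conc n hn l hl _ _ _ c α β hx0 hy0 (hφconc _ _ hx0 hy0 l hl) hc hα hβ hx hy
    have ez : (((1 - l) • x + l • y : ((Submodule.span ℝ {u})ᗮ :
        Submodule ℝ (EuclideanSpace ℝ (Fin n)))) : EuclideanSpace ℝ (Fin n)) +
        ((1 - l) * s + l * t) • u =
        (1 - l) • ((x : EuclideanSpace ℝ (Fin n)) + s • u) + l • ((y : EuclideanSpace ℝ (Fin n)) + t • u) := by
      push_cast
      module
    have hzS : (1 - l) • ((x : EuclideanSpace ℝ (Fin n)) + s • u) +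
        l • ((y : EuclideanSpace ℝ (Fin n)) + t • u) ∈ S :=
      hsub (Set.add_mem_add (Set.smul_mem_smul_set hxA) (Set.smul_mem_smul_set hyB))
    simp only [ez, hzS, indicator_of_mem, Pi.one_apply, mul_one]
    exact ENNReal.ofReal_le_ofReal hz
  rcases eq_or_ne (⨆ t, F A t) 0 with h0 | h0
  · have hB0 := hsec ▸ h0
    rw [ENNReal.iSup_eq_zero] at h0 hB0
    simp [h0, hB0]
  set M := ⨆ t, F A t with hM
  have key := oneD_scaled l hl (F A) (F B) (F S) (mF A hA) (mF B hB) (mF S hS) M M M hM.symm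
    hsec.symm h0 h0 hfin hfin h0 hfin (by
      intro θ hθ x y hx hy
      have e : ENNReal.ofReal θ * M = ENNReal.ofReal (θ * M.toReal) := by
        rw [ENNReal.ofReal_mul hθ.1.le, ENNReal.ofReal_toReal hfin]
      rw [e] at hx hy ⊢
      exact main _ (mul_pos hθ.1 (ENNReal.toReal_pos h0 hfin)) x y hx hy)
  refine le_trans (le_of_eq ?_) key
  rw [mul_add, mul_left_comm, mul_left_comm M, ENNReal.mul_div_cancel h0 hfin,
    ENNReal.mul_div_cancel h0 hfin]
end
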